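/- Size of learning data: there exists a constant C such that for every solvable tuple pattern t = (p₁,…,pₙ) with |p₁···pₙ| = m there exists learning data M (with two rows) such that (i) size(M) ≤ C·(m+n)·(⌈log₂ n⌉ + 1); (ii) ((x₁,…,xₙ), [M/x⃗]) ⟶* (t, Θ) for some Θ with (t, Θ) admitting no further ⟶ step; and (iii) whenever ((x₁,…,xₙ), [M/x⃗]) ⟶* (t′, Θ′) with (t′, Θ′) admitting no further ⟶ step, L(t) = L(t′). -/

import Mathlib

namespace STPaper

variable {A V : Type}

/-- A word over the alphabet `A`. -/
abbrev Word (A : Type) := List A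

/-- A pattern: a finite word over `A ⊕ V` (letters and variables). -/
abbrev Pat (A V : Type) := List (A ⊕ V)

/-- A tuple pattern: a finite tuple of patterns. -/
abbrev TP (A V : Type) := List (Pat A V)

/-- A column of learning data: one word per row. -/
abbrev Col (A : Type) := List (Word A)

/-- Learning data, represented as its list of columns. -/
abbrev Data (A : Type) := List (Col A)

/-- A data-substitution `[M/x⃗]`: the number `m` of rows together with the list pairing each
variable of `x⃗` with the corresponding column of `M`. -/
structure DSub (A V : Type) where
  m : ℕ
  entries : List (V × Col A)

/-- Apply a word-valued substitution to a pattern. -/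
def substPatW (θ : V → Word A) (p : Pat A V) : Word A :=
  (p.map (Sum.elim (fun a => [a]) θ)).flatten

/-- Look up the column assigned to a variable by a data-substitution (default: all-ε). -/
def lookupCol [DecidableEq V] (E : List (V × Col A)) (x : V) : Col A :=
  match E.find? (fun e => decide (e.1 = x)) with
  | some e => e.2
  | none => []

/-- The substitution corresponding to the `i`-th row of a data-substitution. -/
def DSub.rowSub [DecidableEq V] (Θ : DSub A V) (i : ℕ) : V → Word A :=
  fun x => (lookupCol Θ.entries x).getD i []

/-- `Θ.apply t` : the matrix `Θt` (as a list of columns, each of length `Θ.m`). -/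
def DSub.apply [DecidableEq V] (Θ : DSub A V) (t : TP A V) : Data A :=
  t.map (fun p => (List.range Θ.m).map (fun i => substPatW (Θ.rowSub i) p))

/-- Well-formedness of a data-substitution: pairwise-distinct variables and
all columns of length `m`. -/
def DSub.WF (Θ : DSub A V) : Prop :=
  (Θ.entries.map Prod.fst).Nodup ∧ ∀ e ∈ Θ.entries, e.2.length = Θ.m

/-- The free variables of a tuple pattern. -/
def fvTP (t : TP A V) : Set V := {x | Sum.inr x ∈ t.flatten}

/-- Substitution of a single pattern `q` for the variable `x` in a pattern. -/
def substVar [DecidableEq A] [DecidableEq V] (x : V) (q : Pat A V) (p : Pat A V) : Pat A V :=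
  (p.map (fun s => if s = Sum.inr x then q else [s])).flatten

/-- Substitution of a single pattern `q` for the variable `x` in a tuple pattern. -/
def substVarTP [DecidableEq A] [DecidableEq V] (x : V) (q : Pat A V) (t : TP A V) : TP A V :=
  t.map (substVar x q)

/-- Simultaneous substitution `[qs/xs]p` of the patterns `qs` for the variables `xs`. -/
def substVars [DecidableEq V] (xs : List V) (qs : List (Pat A V)) (p : Pat A V) : Pat A V :=
  (p.map (fun s =>
    match s with
    | Sum.inl a => [Sum.inl a]
    | Sum.inr x =>
      match (xs.zip qs).find? (fun e => decide (e.1 = x)) with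
      | some e => e.2
      | none => [Sum.inr x])).flatten

/-- Simultaneous substitution `[qs/xs]t` on a tuple pattern. -/
def substVarsTP [DecidableEq V] (xs : List V) (qs : List (Pat A V)) (t : TP A V) : TP A V :=
  t.map (substVars xs qs)

/-- A column is the all-ε column. -/
def allEps (c : Col A) : Prop := ∀ w ∈ c, w = []

/-- The trivial tuple pattern `(x₁, …, xₙ)`. -/
def trivTP (xs : List V) : TP A V := xs.map (fun x => [Sum.inr x])

section
variable [DecidableEq A] [DecidableEq V]

/-- The rewriting relation ⟶ on pairs of a tuple pattern and a data-substitution. -/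
inductive Step : (TP A V × DSub A V) → (TP A V × DSub A V) → Prop
  | pre (t : TP A V) (m : ℕ) (E : List (V × Col A)) (i j : ℕ)
      (hi : i < E.length) (hj : j < E.length) (hij : i ≠ j)
      (s : Col A) (hslen : s.length = (E[i]'hi).2.length)
      (hpre : (E[j]'hj).2 = List.zipWith (· ++ ·) (E[i]'hi).2 s)
      (hne : ¬ allEps (E[i]'hi).2)
      (x' : V) (hx1 : x' ∉ E.map Prod.fst) (hx2 : Sum.inr x' ∉ t.flatten) :
      Step (t, ⟨m, E⟩)
        (substVarTP (E[j]'hj).1 [Sum.inr (E[i]'hi).1, Sum.inr x'] t,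
         ⟨m, E.set j (x', s)⟩)
  | cpre (t : TP A V) (m : ℕ) (E : List (V × Col A)) (j : ℕ)
      (hj : j < E.length) (a : A) (s : Col A)
      (hpre : (E[j]'hj).2 = s.map (fun w => a :: w))
      (x' : V) (hx1 : x' ∉ E.map Prod.fst) (hx2 : Sum.inr x' ∉ t.flatten) :
      Step (t, ⟨m, E⟩)
        (substVarTP (E[j]'hj).1 [Sum.inl a, Sum.inr x'] t, ⟨m, E.set j (x', s)⟩)
  | eps (t : TP A V) (m : ℕ) (E : List (V × Col A)) (j : ℕ)
      (hj : j < E.length) (heps : allEps (E[j]'hj).2) :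
      Step (t, ⟨m, E⟩) (substVarTP (E[j]'hj).1 [] t, ⟨m, E.eraseIdx j⟩)

/-- `n`-step rewriting. -/
def StepN : ℕ → (TP A V × DSub A V) → (TP A V × DSub A V) → Prop
  | 0 => fun c₁ c₂ => c₁ = c₂
  | n + 1 => fun c₁ c₃ => ∃ c₂, Step c₁ c₂ ∧ StepN n c₂ c₃

end

/-- The reduction relation ⇒ on tuple patterns. -/
inductive PStep : TP A V → TP A V → Prop
  | pre (t : TP A V) (i j : ℕ) (hi : i < t.length) (hj : j < t.length)
      (hij : i ≠ j) (p' : Pat A V)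
      (hdec : t[j]'hj = (t[i]'hi) ++ p') (hne : t[i]'hi ≠ []) :
      PStep t (t.set j p')
  | cpre (t : TP A V) (j : ℕ) (hj : j < t.length) (a : A) (p' : Pat A V)
      (hdec : t[j]'hj = Sum.inl a :: p') :
      PStep t (t.set j p')
  | eps (t : TP A V) (j : ℕ) (hj : j < t.length) (heps : t[j]'hj = []) :
      PStep t (t.eraseIdx j)

/-- A tuple pattern is solvable if it reduces to a trivial tuple of pairwise
distinct variables. -/
def Solvable (t : TP A V) : Prop :=
  ∃ ys : List V, ys.Nodup ∧ Relation.ReflTransGen PStep t (trivTP ys)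

/-- The language of a tuple pattern. -/
def lang (t : TP A V) : Set (List (Word A)) :=
  {w | ∃ θ : V → Word A, w = t.map (substPatW θ)}

/-- `M ⊨ t` : there is a data-substitution `Θ` (with `rows` rows) with `Θt = M`. -/
def Models [DecidableEq V] (M : Data A) (rows : ℕ) (t : TP A V) : Prop :=
  ∃ Θ : DSub A V, Θ.m = rows ∧ Θ.WF ∧ Θ.apply t = M

/-- `M ⊨ₛ t` : additionally, no variable of `t` is mapped to ε in every row. -/
def SModels [DecidableEq V] (M : Data A) (rows : ℕ) (t : TP A V) : Prop :=
  ∃ Θ : DSub A V, Θ.m = rows ∧ Θ.WF ∧ Θ.apply t = M ∧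
    ∀ x ∈ fvTP t, ¬ allEps (lookupCol Θ.entries x)

/-- Renaming the variables of a tuple pattern. -/
def renameTP (ρ : V → V) (t : TP A V) : TP A V :=
  t.map (List.map (Sum.map id ρ))

/-- The measure `#t` of a tuple pattern. -/
def tpMeasure (t : TP A V) : ℕ := (t.map List.length).sum + t.length

/-- `size(M)`. -/
def dataSize (M : Data A) : ℕ :=
  (M.map (fun c => (c.map (fun w => w.length + 1)).sum)).sum

/-- Learning data (as columns) whose rows enumerate the given list of tuples. -/
def colsOfRows (n : ℕ) (rows : List (List (Word A))) : Data A :=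
  (List.range n).map (fun j => rows.map (fun r => r.getD j []))

/-- `m ⊨ₛ t` for a (possibly infinite) set of tuples of words. -/
def SetSModels (S : Set (List (Word A))) (t : TP A V) : Prop :=
  ∃ θ : S → V → Word A,
    (∀ v : S, (v : List (Word A)) = t.map (substPatW (θ v))) ∧
    ∀ x ∈ fvTP t, ∃ v : S, θ v x ≠ []

/-- A rule instance of the ⇒ relation. -/
inductive RuleInst (A V : Type) where
  | pre (i j : ℕ)
  | cpre (j : ℕ) (a : A)
  | eps (j : ℕ)

/-- The reduction step derived by a given rule instance. -/
def RuleStep : RuleInst A V → TP A V → TP A V → Prop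
  | .pre i j, t, t' => ∃ (hi : i < t.length) (hj : j < t.length),
      i ≠ j ∧ t[i]'hi ≠ [] ∧ ∃ p', t[j]'hj = (t[i]'hi) ++ p' ∧ t' = t.set j p'
  | .cpre j a, t, t' => ∃ (_ : j < t.length) (p' : Pat A V),
      t.getD j [] = Sum.inl a :: p' ∧ t' = t.set j p'
  | .eps j, t, t' => ∃ (_ : j < t.length), t.getD j [] = ([] : Pat A V) ∧ t' = t.eraseIdx j

/-- Well-definedness of the residual of a tuple pattern along a rule instance. -/
def ResDefined : RuleInst A V → TP A V → Prop
  | .pre i j, t => i < t.length ∧ j < t.length ∧ (t.getD i []) <+: (t.getD j [])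
  | .cpre j a, t => j < t.length ∧ ∃ p', t.getD j [] = Sum.inl a :: p'
  | .eps j, t => j < t.length ∧ t.getD j [] = ([] : Pat A V)

/-- The residual of a tuple pattern along a rule instance. -/
def residual : RuleInst A V → TP A V → TP A V
  | .pre i j, t => t.set j ((t.getD j []).drop (t.getD i []).length)
  | .cpre j _, t => t.set j ((t.getD j []).drop 1)
  | .eps j, t => t.eraseIdx j

/-- The reduction relation ⇒ extended with the postfix rules. -/
inductive PStepX : TP A V → TP A V → Prop
  | pre (t : TP A V) (i j : ℕ) (hi : i < t.length) (hj : j < t.length)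
      (hij : i ≠ j) (p' : Pat A V)
      (hdec : t[j]'hj = (t[i]'hi) ++ p') (hne : t[i]'hi ≠ []) :
      PStepX t (t.set j p')
  | cpre (t : TP A V) (j : ℕ) (hj : j < t.length) (a : A) (p' : Pat A V)
      (hdec : t[j]'hj = Sum.inl a :: p') :
      PStepX t (t.set j p')
  | eps (t : TP A V) (j : ℕ) (hj : j < t.length) (heps : t[j]'hj = []) :
      PStepX t (t.eraseIdx j)
  | post (t : TP A V) (i j : ℕ) (hi : i < t.length) (hj : j < t.length)
      (hij : i ≠ j) (p' : Pat A V)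
      (hdec : t[j]'hj = p' ++ (t[i]'hi)) (hne : t[i]'hi ≠ []) :
      PStepX t (t.set j p')
  | cpost (t : TP A V) (j : ℕ) (hj : j < t.length) (a : A) (p' : Pat A V)
      (hdec : t[j]'hj = p' ++ [Sum.inl a]) :
      PStepX t (t.set j p')

/-!
Attach to every tuple pattern the smallest left-unitary submonoid of `(A ⊕ V)*` (closed under
concatenation and under cancelling a left factor) that contains its components and all letters.
A step of `⇒` does not change this submonoid. The components and letters of a `⇒`-normal tuple
form a prefix code, so they generate a monoid that is already left unitary; if the tuple is
reachable from a solvable one, that monoid contains each of its variables, and hence every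
component is a single variable.

A solvable tuple of arity `n` has at most `n` variables, so they can be numbered by binary words of
length `⌈log₂ n⌉`. The first row of the data replaces the variable numbered `w` by `a·w`, the second
row by `b·w`, with `a ≠ b`. A position where the two rows agree comes from a letter and one where
they disagree starts a variable, so a pattern can be read off from its column and prefixes of
columns are columns of prefixes. Every `⟶`-step on the data is therefore a `⇒`-step on patterns, and
a terminal data configuration corresponds to a `⇒`-normal tuple of distinct variables.
-/

section LeftUnitary

variable {α : Type*} {L L' : Language α} {u v w : List α}

open scoped Computability

/-- The left-unitary hull of `L`: the smallest submonoid of the free monoid containing `L` that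
contains `v` whenever it contains `u` and `u ++ v`. -/
inductive UnitaryHull (L : Language α) : List α → Prop
  | nil : UnitaryHull L []
  | of_mem {w : List α} : w ∈ L → UnitaryHull L w
  | append {u v : List α} : UnitaryHull L u → UnitaryHull L v → UnitaryHull L (u ++ v)
  | cancel_left {u v : List α} : UnitaryHull L u → UnitaryHull L (u ++ v) → UnitaryHull L v

theorem UnitaryHull.of_forall_mem (h : ∀ p ∈ L, UnitaryHull L' p) (hw : UnitaryHull L w) :
    UnitaryHull L' w := by
  induction hw with
  | nil => exact .nil
  | of_mem hw => exact h _ hw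
  | append _ _ ihu ihv => exact ihu.append ihv
  | cancel_left _ _ ihu ihuv => exact ihu.cancel_left ihuv

theorem append_mem_kstar (hu : u ∈ L∗) (hv : v ∈ L∗) : u ++ v ∈ L∗ :=
  kstar_mul_kstar L ▸ Language.append_mem_mul hu hv

theorem mem_kstar_of_append_mem_kstar (hL : IsAntichain (· <+: ·) (L : Set (List α)))
    (hu : u ∈ L∗) (huv : u ++ v ∈ L∗) : v ∈ L∗ := by
  obtain ⟨cs, rfl, hcs⟩ := hu
  induction cs with
  | nil => simpa using huv
  | cons c cs ih =>
    obtain ⟨ds, hflat, hds⟩ := huv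
    rw [List.forall_mem_cons] at hcs
    cases ds with
    | nil =>
      obtain ⟨-, rfl⟩ := List.append_eq_nil_iff.1 hflat
      exact L.nil_mem_kstar
    | cons d ds =>
      rw [List.forall_mem_cons] at hds
      rw [List.flatten_cons, List.flatten_cons, List.append_assoc] at hflat
      have hcd : c = d := by
        rcases List.prefix_or_prefix_of_prefix (List.prefix_append c _)
          (hflat ▸ List.prefix_append d _) with h | h
        · exact hL.eq hcs.1 hds.1 h
        · exact (hL.eq hds.1 hcs.1 h).symm
      subst hcd
      exact ih hcs.2 ⟨ds, List.append_cancel_left hflat, hds.2⟩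

theorem UnitaryHull.mem_kstar (hL : IsAntichain (· <+: ·) (L : Set (List α)))
    (hw : UnitaryHull L w) : w ∈ L∗ := by
  induction hw with
  | nil => exact L.nil_mem_kstar
  | of_mem hw => exact le_kstar (a := L) hw
  | append _ _ ihu ihv => exact append_mem_kstar ihu ihv
  | cancel_left _ _ ihu ihuv => exact mem_kstar_of_append_mem_kstar hL ihu ihuv

end LeftUnitary

section Reduction

variable {t t' q : TP A V} {p u w : Pat A V}

/-- The components of a tuple pattern together with the one-letter words over `A`: exactly the
prefixes that `⇒` may delete. -/
def factors (t : TP A V) : Language (A ⊕ V) :=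
  {p | p ∈ t ∨ ∃ a, p = [Sum.inl a]}

theorem unitaryHull_factors_set_iff {j : ℕ} (hj : j < t.length) (hdec : t[j] = u ++ p)
    (hu : u ∈ factors t) (hu' : u ∈ factors (t.set j p)) :
    UnitaryHull (factors (t.set j p)) w ↔ UnitaryHull (factors t) w := by
  have hset := fun r => (List.set_perm_cons_eraseIdx hj p).mem_iff (a := r)
  have hold := fun r => (List.getElem_cons_eraseIdx_perm hj).mem_iff (a := r)
  simp only [List.mem_cons] at hset hold
  constructor
  · refine UnitaryHull.of_forall_mem ?_
    rintro r (hr | hr)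
    · rcases (hset r).1 hr with rfl | hr
      · exact .cancel_left (.of_mem hu) (.of_mem (.inl (hdec ▸ List.getElem_mem hj)))
      · exact .of_mem (.inl ((hold r).1 (.inr hr)))
    · exact .of_mem (.inr hr)
  · refine UnitaryHull.of_forall_mem ?_
    rintro r (hr | hr)
    · rcases (hold r).2 hr with rfl | hr
      · exact hdec ▸ .append (.of_mem hu') (.of_mem (.inl (List.mem_set hj p)))
      · exact .of_mem (.inl ((hset r).2 (.inr hr)))
    · exact .of_mem (.inr hr)

theorem PStep.unitaryHull_factors_iff (h : PStep t t') :
    UnitaryHull (factors t') w ↔ UnitaryHull (factors t) w := by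
  cases h with
  | pre i j hi hj hij p' hdec =>
    refine unitaryHull_factors_set_iff hj hdec (.inl (List.getElem_mem hi)) (.inl ?_)
    rw [← List.getElem_set_ne hij.symm (by simpa using hi)]
    exact List.getElem_mem _
  | cpre j hj a p' hdec =>
    exact unitaryHull_factors_set_iff (u := [Sum.inl a]) hj hdec (.inr ⟨a, rfl⟩) (.inr ⟨a, rfl⟩)
  | eps j hj heps =>
    constructor <;> refine UnitaryHull.of_forall_mem ?_ <;> rintro r (hr | hr)
    · exact .of_mem (.inl (List.mem_of_mem_eraseIdx hr))
    · exact .of_mem (.inr hr)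
    · rcases List.mem_cons.1 ((List.getElem_cons_eraseIdx_perm hj).mem_iff.2 hr) with rfl | hr
      · exact heps ▸ .nil
      · exact .of_mem (.inl hr)
    · exact .of_mem (.inr hr)

theorem unitaryHull_factors_iff_of_reduces (h : Relation.ReflTransGen PStep t t') :
    UnitaryHull (factors t') w ↔ UnitaryHull (factors t) w := by
  induction h with
  | refl => rfl
  | tail _ h ih => exact h.unitaryHull_factors_iff.trans ih

/-- The variables of a single pattern. -/
def fvPat (p : Pat A V) : Set V :=
  {x | Sum.inr x ∈ p}

theorem mem_fvTP {x : V} : x ∈ fvTP t ↔ ∃ p ∈ t, x ∈ fvPat p :=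
  List.mem_flatten

theorem UnitaryHull.fvPat_subset (h : UnitaryHull (factors t) w) : fvPat w ⊆ fvTP t := by
  intro x hx
  induction h with
  | nil => cases hx
  | of_mem hw =>
    rcases hw with hw | ⟨a, rfl⟩
    · exact mem_fvTP.2 ⟨_, hw, hx⟩
    · simp [fvPat] at hx
  | append _ _ ihu ihv => exact (List.mem_append.1 hx).elim ihu ihv
  | cancel_left _ _ _ ihuv => exact ihuv (List.mem_append_right _ hx)

theorem fvTP_eq_of_reduces (h : Relation.ReflTransGen PStep t t') : fvTP t' = fvTP t := by
  ext x
  constructor <;> intro hx <;> obtain ⟨p, hp, hxp⟩ := mem_fvTP.1 hx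
  · exact ((unitaryHull_factors_iff_of_reduces h).1 (.of_mem (.inl hp))).fvPat_subset hxp
  · exact ((unitaryHull_factors_iff_of_reduces h).2 (.of_mem (.inl hp))).fvPat_subset hxp

theorem tpMeasure_cons : tpMeasure (p :: t) = p.length + 1 + tpMeasure t := by
  simp only [tpMeasure, List.map_cons, List.sum_cons, List.length_cons]
  omega

theorem tpMeasure_congr (h : t.Perm t') : tpMeasure t = tpMeasure t' := by
  rw [tpMeasure, tpMeasure, (h.map _).sum_eq, h.length_eq]

theorem PStep.tpMeasure_lt (h : PStep t t') : tpMeasure t' < tpMeasure t := by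
  cases h with
  | pre i j hi hj _ p' hdec hne =>
    have := List.length_pos_iff.2 hne
    rw [← tpMeasure_congr (List.getElem_cons_eraseIdx_perm hj),
      tpMeasure_congr (List.set_perm_cons_eraseIdx hj p'), tpMeasure_cons, tpMeasure_cons, hdec,
      List.length_append]
    omega
  | cpre j hj a p' hdec =>
    rw [← tpMeasure_congr (List.getElem_cons_eraseIdx_perm hj),
      tpMeasure_congr (List.set_perm_cons_eraseIdx hj p'), tpMeasure_cons, tpMeasure_cons, hdec,
      List.length_cons]
    omega
  | eps j hj =>
    rw [← tpMeasure_congr (List.getElem_cons_eraseIdx_perm hj), tpMeasure_cons]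
    omega

theorem wellFounded_flip_pstep : WellFounded (flip (PStep (A := A) (V := V))) :=
  Subrelation.wf (fun h => PStep.tpMeasure_lt h) (measure tpMeasure).wf

theorem length_le_of_reduces (h : Relation.ReflTransGen PStep t t') : t'.length ≤ t.length := by
  induction h with
  | refl => exact le_rfl
  | tail _ h ih =>
    refine le_trans ?_ ih
    cases h with
    | pre | cpre => simp
    | eps j => exact List.length_eraseIdx_le ..

end Reduction

section NormalForms

variable {t q : TP A V} {p : Pat A V}

theorem exists_eq_inr_cons_of_mem_normal (hq : ¬ ∃ q', PStep q q') (hp : p ∈ q) :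
    ∃ y r, p = Sum.inr y :: r := by
  obtain ⟨j, hj, rfl⟩ := List.getElem_of_mem hp
  rcases h : q[j] with _ | ⟨a | y, r⟩
  · exact absurd ⟨_, .eps q j hj h⟩ hq
  · exact absurd ⟨_, .cpre q j hj a r h⟩ hq
  · exact ⟨y, r, rfl⟩

theorem eq_of_getElem_prefix_of_normal (hq : ¬ ∃ q', PStep q q') {i j : ℕ} (hi : i < q.length)
    (hj : j < q.length) (h : q[i] <+: q[j]) : i = j := by
  obtain ⟨r, hr⟩ := h
  obtain ⟨y, s, hs⟩ := exists_eq_inr_cons_of_mem_normal hq (List.getElem_mem hi)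
  by_contra hij
  exact hq ⟨_, .pre q i j hi hj hij r hr.symm (by simp [hs])⟩

theorem nodup_of_normal (hq : ¬ ∃ q', PStep q q') : q.Nodup :=
  List.nodup_iff_injective_getElem.2 fun i j hij =>
    Fin.ext (eq_of_getElem_prefix_of_normal hq i.2 j.2 ⟨[], by simpa using hij⟩)

theorem isAntichain_factors_of_normal (hq : ¬ ∃ q', PStep q q') :
    IsAntichain (· <+: ·) (factors q : Set (Pat A V)) := by
  rintro c (hc | ⟨a, rfl⟩) d (hd | ⟨b, rfl⟩) hne hcd
  · obtain ⟨i, hi, rfl⟩ := List.getElem_of_mem hc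
    obtain ⟨j, hj, rfl⟩ := List.getElem_of_mem hd
    obtain rfl := eq_of_getElem_prefix_of_normal hq hi hj hcd
    exact hne rfl
  · obtain ⟨y, r, rfl⟩ := exists_eq_inr_cons_of_mem_normal hq hc
    simp at hcd
  · obtain ⟨y, r, rfl⟩ := exists_eq_inr_cons_of_mem_normal hq hd
    simp at hcd
  · exact hne (by simpa using hcd)

theorem eq_singleton_of_mem_normal (hq : ¬ ∃ q', PStep q q')
    (hvar : ∀ y ∈ fvTP q, UnitaryHull (factors q) [Sum.inr y]) (hp : p ∈ q) :
    ∃ y, p = [Sum.inr y] := by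
  have hanti := isAntichain_factors_of_normal hq
  obtain ⟨y, r, rfl⟩ := exists_eq_inr_cons_of_mem_normal hq hp
  have hy : y ∈ fvTP q := mem_fvTP.2 ⟨_, hp, List.mem_cons_self⟩
  obtain ⟨cs, hflat, hcs⟩ :=
    Language.mem_kstar_iff_exists_nonempty.1 ((hvar y hy).mem_kstar hanti)
  obtain ⟨c, hc⟩ := List.exists_mem_of_ne_nil cs (by rintro rfl; simp at hflat)
  obtain ⟨hcq, hc_ne⟩ := hcs c hc
  have hc_eq : c = [Sum.inr y] :=
    (hflat ▸ List.sublist_flatten_of_mem hc : c.Sublist [Sum.inr y]).eq_of_length_le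
      (List.length_pos_iff.2 hc_ne)
  refine ⟨y, (hanti.eq (hc_eq ▸ hcq) (.inl hp) ?_).symm⟩
  simp

theorem exists_eq_trivTP_of_normal (hq : ¬ ∃ q', PStep q q')
    (hvar : ∀ y ∈ fvTP q, UnitaryHull (factors q) [Sum.inr y]) :
    ∃ zs : List V, zs.Nodup ∧ q = trivTP zs := by
  obtain ⟨zs, rfl⟩ : q ∈ Set.range (List.map fun x : V => ([Sum.inr x] : Pat A V)) := by
    rw [Set.range_list_map]
    intro p hp
    obtain ⟨y, rfl⟩ := eq_singleton_of_mem_normal hq hvar hp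
    exact ⟨y, rfl⟩
  exact ⟨zs, (nodup_of_normal hq).of_map, rfl⟩

theorem mem_fvTP_trivTP {ys : List V} {y : V} : y ∈ fvTP (trivTP ys : TP A V) ↔ y ∈ ys := by
  simp [fvTP, trivTP]

theorem Solvable.exists_length_le_fvTP_subset (ht : Solvable t) :
    ∃ ys : List V, ys.length ≤ t.length ∧ ∀ y ∈ fvTP t, y ∈ ys := by
  obtain ⟨ys, -, hred⟩ := ht
  refine ⟨ys, by simpa [trivTP] using length_le_of_reduces hred, fun y hy => ?_⟩
  rwa [← fvTP_eq_of_reduces hred, mem_fvTP_trivTP] at hy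

theorem Solvable.unitaryHull_inr (ht : Solvable t) {y : V} (hy : y ∈ fvTP t) :
    UnitaryHull (factors t) [Sum.inr y] := by
  obtain ⟨ys, -, hred⟩ := ht
  rw [← fvTP_eq_of_reduces hred, mem_fvTP_trivTP] at hy
  exact (unitaryHull_factors_iff_of_reduces hred).1
    (.of_mem (.inl (List.mem_map_of_mem hy)))

theorem Solvable.exists_eq_trivTP (ht : Solvable t) (hred : Relation.ReflTransGen PStep t q)
    (hq : ¬ ∃ q', PStep q q') : ∃ zs : List V, zs.Nodup ∧ q = trivTP zs := by
  refine exists_eq_trivTP_of_normal hq fun y hy => ?_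
  rw [fvTP_eq_of_reduces hred] at hy
  exact (unitaryHull_factors_iff_of_reduces hred).2 (ht.unitaryHull_inr hy)

end NormalForms

section Columns

variable {p q : Pat A V} {S : Set V} {θs : List (V → Word A)}

@[simp] theorem substPatW_nil (θ : V → Word A) : substPatW θ ([] : Pat A V) = [] := rfl

@[simp] theorem substPatW_inl_cons (θ : V → Word A) (a : A) (p : Pat A V) :
    substPatW θ (Sum.inl a :: p) = a :: substPatW θ p := rfl

@[simp] theorem substPatW_inr_cons (θ : V → Word A) (y : V) (p : Pat A V) :
    substPatW θ (Sum.inr y :: p) = θ y ++ substPatW θ p := rfl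

@[simp] theorem substPatW_append (θ : V → Word A) (p q : Pat A V) :
    substPatW θ (p ++ q) = substPatW θ p ++ substPatW θ q := by
  simp [substPatW]

/-- The column of learning data encoding the pattern `p`: one row for each substitution. -/
def column (θs : List (V → Word A)) (p : Pat A V) : Col A :=
  θs.map fun θ => substPatW θ p

@[simp] theorem length_column : (column θs p).length = θs.length :=
  List.length_map _

theorem column_append :
    column θs (p ++ q) = List.zipWith (· ++ ·) (column θs p) (column θs q) := by
  simp [column]

theorem map_cons_eq_zipWith_column {s : Col A} (hs : s.length = θs.length) (a : A) :
    s.map (a :: ·) = List.zipWith (· ++ ·) (column θs ([Sum.inl a] : Pat A V)) s := by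
  refine List.ext_getElem (by simp [hs]) fun k _ _ => ?_
  simp [column]

/-- The substitutions `θs` jointly reflect the prefix order on patterns over `S`. This makes
columns as informative as patterns for the rewriting rules. -/
def ReflectsPrefix (θs : List (V → Word A)) (S : Set V) : Prop :=
  ∀ ⦃p q : Pat A V⦄, fvPat p ⊆ S → fvPat q ⊆ S →
    (∀ θ ∈ θs, substPatW θ p <+: substPatW θ q) → p <+: q

theorem ReflectsPrefix.mono {S' : Set V} (hθ : ReflectsPrefix θs S) (h : S' ⊆ S) :
    ReflectsPrefix θs S' := fun _ _ hp hq => hθ (hp.trans h) (hq.trans h)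

theorem ReflectsPrefix.allEps_column_iff (hθ : ReflectsPrefix θs S) (hp : fvPat p ⊆ S) :
    allEps (column θs p) ↔ p = [] := by
  constructor
  · intro heps
    refine List.prefix_nil.1 (hθ hp (by simp [fvPat]) fun θ hmem => ?_)
    rw [heps _ (List.mem_map_of_mem hmem)]
    exact List.nil_prefix
  · rintro rfl w hw
    obtain ⟨θ, -, rfl⟩ := List.mem_map.1 hw
    rfl

theorem ReflectsPrefix.exists_append (hθ : ReflectsPrefix θs S) (hp : fvPat p ⊆ S)
    (hq : fvPat q ⊆ S) {s : Col A} (hs : s.length = θs.length)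
    (hpq : column θs q = List.zipWith (· ++ ·) (column θs p) s) :
    ∃ p', q = p ++ p' ∧ s = column θs p' := by
  have hrow : ∀ (k : ℕ) (hk : k < θs.length),
      substPatW θs[k] q = substPatW θs[k] p ++ s[k] := by
    intro k hk
    have := List.getElem_of_eq hpq (by simpa using hk : k < (column θs q).length)
    simpa [column] using this
  obtain ⟨p', rfl⟩ : p <+: q := hθ hp hq fun θ hmem => by
    obtain ⟨k, hk, rfl⟩ := List.getElem_of_mem hmem
    exact ⟨_, (hrow k hk).symm⟩
  refine ⟨p', rfl, List.ext_getElem (by simp [hs]) fun k hk _ => ?_⟩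
  have := hrow k (hs ▸ hk)
  rw [substPatW_append, List.append_cancel_left_eq] at this
  simp [column, this]

end Columns

section BinaryCode

variable {S : Set V} {a b : A} {w : V → Word A} {W : ℕ}

theorem reflectsPrefix_twoRows (hab : a ≠ b) (hw : ∀ y, (w y).length = W) (hinj : S.InjOn w) :
    ReflectsPrefix [fun y => a :: w y, fun y => b :: w y] S := by
  intro p q hp hq h
  simp only [List.forall_mem_cons, List.not_mem_nil, false_imp_iff, implies_true, and_true] at h
  obtain ⟨ha, hb⟩ := h
  induction p generalizing q with
  | nil => exact List.nil_prefix
  | cons s p ih =>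
    have hp' : fvPat p ⊆ S := fun y hy => hp (List.mem_cons_of_mem _ hy)
    rcases q with _ | ⟨s', q⟩
    · cases s <;> simp at ha
    have hq' : fvPat q ⊆ S := fun y hy => hq (List.mem_cons_of_mem _ hy)
    rcases s with c | y <;> rcases s' with d | z <;>
      simp only [substPatW_inl_cons, substPatW_inr_cons, List.cons_append,
        List.cons_prefix_cons] at ha hb
    · exact List.cons_prefix_cons.2 ⟨congrArg _ ha.1, ih hp' hq' ha.2 hb.2⟩
    · exact absurd (ha.1.symm.trans hb.1) hab
    · exact absurd (ha.1.trans hb.1.symm) hab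
    · have hlen : (w y).length = (w z).length := by rw [hw, hw]
      have hyz : w y = w z := (List.prefix_append_inj_of_length_eq hlen).1 ha.2 |>.1
      have hpa := ((List.prefix_append_inj_of_length_eq hlen).1 ha.2).2
      have hpb := ((List.prefix_append_inj_of_length_eq hlen).1 hb.2).2
      rw [hinj (hp List.mem_cons_self) (hq List.mem_cons_self) hyz]
      exact List.cons_prefix_cons.2 ⟨rfl, ih hp' hq' hpa hpb⟩

/-- The `W` least significant binary digits of `k`, lowest first, with `a` for one and `b` for
zero. -/
def binaryWord (a b : A) (W k : ℕ) : Word A :=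
  (List.range W).map fun i => if k.testBit i then a else b

theorem binaryWord_injOn (hab : a ≠ b) : Set.InjOn (binaryWord a b W) (Set.Iio (2 ^ W)) := by
  intro k hk l hl h
  refine Nat.eq_of_testBit_eq fun i => ?_
  rcases lt_or_ge i W with hi | hi
  · have := List.map_inj_left.1 h i (List.mem_range.2 hi)
    cases hki : k.testBit i <;> cases hli : l.testBit i <;> simp_all
  · have hWi : 2 ^ W ≤ 2 ^ i := Nat.pow_le_pow_right two_pos hi
    rw [Nat.testBit_lt_two_pow (hk.trans_le hWi), Nat.testBit_lt_two_pow (hl.trans_le hWi)]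

theorem exists_words_injOn (hab : a ≠ b) (ys : List V) (hys : ys.length ≤ 2 ^ W) :
    ∃ w : V → Word A, (∀ y, (w y).length = W) ∧ Set.InjOn w {y | y ∈ ys} := by
  classical
  refine ⟨fun y => binaryWord a b W (ys.idxOf y), fun y => by simp [binaryWord], ?_⟩
  intro y hy z hz h
  have hlt : ∀ x ∈ ys, ys.idxOf x ∈ Set.Iio (2 ^ W) := fun x hx =>
    (List.idxOf_lt_length_of_mem hx).trans_le hys
  exact (List.idxOf_inj hy).1 (binaryWord_injOn hab (hlt y hy) (hlt z hz) h)

theorem exists_twoRows_reflectsPrefix [Nontrivial A] (ys : List V) (hys : ys.length ≤ 2 ^ W) :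
    ∃ θ₁ θ₂ : V → Word A, ReflectsPrefix [θ₁, θ₂] {y | y ∈ ys} ∧
      ∀ θ ∈ [θ₁, θ₂], ∀ y, (θ y).length = W + 1 := by
  obtain ⟨a, b, hab⟩ := exists_pair_ne A
  obtain ⟨w, hlen, hinj⟩ := exists_words_injOn hab ys hys
  exact ⟨_, _, reflectsPrefix_twoRows hab hlen hinj, by simp [hlen]⟩

end BinaryCode

section DataSize

variable {θs : List (V → Word A)} {K : ℕ}

theorem length_substPatW_le {θ : V → Word A} (hK : 1 ≤ K) (h : ∀ y, (θ y).length ≤ K)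
    (p : Pat A V) : (substPatW θ p).length ≤ p.length * K := by
  induction p with
  | nil => simp
  | cons s p ih =>
    rw [List.length_cons, Nat.succ_mul]
    rcases s with a | y
    · rw [substPatW_inl_cons, List.length_cons]
      omega
    · rw [substPatW_inr_cons, List.length_append]
      linarith [h y]

theorem dataSize_map_column_le (hK : 1 ≤ K) (h : ∀ θ ∈ θs, ∀ y, (θ y).length ≤ K)
    (t : TP A V) : dataSize (t.map (column θs)) ≤ θs.length * tpMeasure t * K := by
  induction t with
  | nil => simp [dataSize]
  | cons p t ih =>
    have hword : ∀ n ∈ (column θs p).map fun w => w.length + 1, n ≤ (p.length + 1) * K := by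
      simp only [column, List.map_map, List.forall_mem_map, Function.comp_apply]
      intro θ hθ
      linarith [length_substPatW_le hK (h θ hθ) p]
    have hcol := List.sum_le_card_nsmul _ _ hword
    calc dataSize ((p :: t).map (column θs))
        = ((column θs p).map fun w => w.length + 1).sum + dataSize (t.map (column θs)) := by
          simp [dataSize]
      _ ≤ θs.length * ((p.length + 1) * K) + θs.length * tpMeasure t * K := by
          gcongr
          simpa using hcol
      _ = θs.length * tpMeasure (p :: t) * K := by
          rw [tpMeasure_cons]
          ring

end DataSize

section PatternSubstitution

variable {f g : V → Pat A V} {p q r : Pat A V} {x : V}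

/-- Application of a pattern-valued substitution to a pattern. -/
def substPat (f : V → Pat A V) (p : Pat A V) : Pat A V :=
  p.flatMap (Sum.elim (fun a => [Sum.inl a]) f)

@[simp] theorem substPat_nil : substPat f [] = [] := rfl

@[simp] theorem substPat_inl_cons (a : A) :
    substPat f (Sum.inl a :: p) = Sum.inl a :: substPat f p := rfl

@[simp] theorem substPat_inr_cons (y : V) :
    substPat f (Sum.inr y :: p) = f y ++ substPat f p := rfl

@[simp] theorem substPat_append : substPat f (p ++ q) = substPat f p ++ substPat f q :=
  List.flatMap_append

theorem substPat_congr (h : ∀ y ∈ fvPat p, f y = g y) : substPat f p = substPat g p := by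
  refine List.flatMap_congr fun s hs => ?_
  rcases s with a | y
  · rfl
  · exact h y hs

theorem substPat_var (p : Pat A V) : substPat (fun y => [Sum.inr y]) p = p := by
  induction p with
  | nil => rfl
  | cons s p ih => rcases s with a | y <;> simp [ih]

theorem map_sumMap_substPat (ρ : V → V) (f : V → Pat A V) (p : Pat A V) :
    (substPat f p).map (Sum.map id ρ) = substPat (fun y => (f y).map (Sum.map id ρ)) p := by
  induction p with
  | nil => rfl
  | cons s p ih => rcases s with a | y <;> simp [ih]

theorem substPatW_map_sumMap (ρ : V → V) (θ : V → Word A) (p : Pat A V) :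
    substPatW θ (p.map (Sum.map id ρ)) = substPatW (θ ∘ ρ) p := by
  induction p with
  | nil => rfl
  | cons s p ih => rcases s with a | y <;> simp [ih]

theorem lang_renameTP (σ : Equiv.Perm V) (t : TP A V) : lang (renameTP σ t) = lang t := by
  ext w
  simp only [lang, renameTP, List.map_map, Function.comp_def, substPatW_map_sumMap]
  exact (σ.symm.arrowCongr (Equiv.refl (Word A))).exists_congr_left.trans (by simp)

variable [DecidableEq A] [DecidableEq V]

theorem substPat_substVar :
    substPat f (substVar x r p) = substPat (Function.update f x (substPat f r)) p := by
  induction p with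
  | nil => rfl
  | cons s p ih =>
    rw [show substVar x r (s :: p) = (if s = Sum.inr x then r else [s]) ++ substVar x r p from rfl,
      substPat_append, ih]
    rcases s with a | y
    · simp
    · by_cases hyx : y = x
      · simp [hyx]
      · simp [hyx]

theorem fvPat_substVar_subset : fvPat (substVar x r p) ⊆ fvPat r ∪ (fvPat p \ {x}) := by
  intro y hy
  simp only [fvPat, substVar, Set.mem_ofPred_eq, List.mem_flatten, List.mem_map] at hy
  obtain ⟨_, ⟨s, hs, rfl⟩, hy⟩ := hy
  split_ifs at hy with hsx
  · exact .inl hy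
  · obtain rfl := List.mem_singleton.1 hy
    exact .inr ⟨hs, fun h => hsx (congrArg _ h)⟩

end PatternSubstitution

section Simulation

variable {f : V → Pat A V} {E : List (V × Col A)} {θs : List (V → Word A)} {t tc : TP A V}

/-- The tuple of patterns which `f` assigns to the variables of a data-substitution. -/
def residue (f : V → Pat A V) (E : List (V × Col A)) : TP A V :=
  E.map fun e => f e.1

/-- The configuration `(tc, [E])` arises from the data encoding `t` by rewriting, with `f` recording
the pattern encoded by each remaining column. -/
structure Decodes (θs : List (V → Word A)) (t : TP A V) (f : V → Pat A V) (tc : TP A V)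
    (E : List (V × Col A)) : Prop where
  nodup_vars : (E.map Prod.fst).Nodup
  column_eq : ∀ e ∈ E, e.2 = column θs (f e.1)
  fvTP_subset : ∀ y ∈ fvTP tc, y ∈ E.map Prod.fst
  map_substPat : tc.map (substPat f) = t
  reduces : Relation.ReflTransGen PStep t (residue f E)

theorem Decodes.initial {xs : List V} (hxs : xs.Nodup) :
    Decodes θs (xs.map f) f (trivTP xs) (xs.map fun x => (x, column θs (f x))) where
  nodup_vars := by simpa [Function.comp_def] using hxs
  column_eq := by simp
  fvTP_subset y hy := by simpa [Function.comp_def] using mem_fvTP_trivTP.1 hy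
  map_substPat := by simp [trivTP]
  reduces := by
    rw [residue, List.map_map]
    rfl

theorem Decodes.fvPat_subset (h : Decodes θs t f tc E) {e : V × Col A} (he : e ∈ E) :
    fvPat (f e.1) ⊆ fvTP t := fun _ hx =>
  fvTP_eq_of_reduces h.reduces ▸ mem_fvTP.2 ⟨_, List.mem_map_of_mem he, hx⟩

theorem Decodes.fst_getElem_ne (h : Decodes θs t f tc E) {i j : ℕ} (hi : i < E.length)
    (hj : j < E.length) (hij : i ≠ j) : E[i].1 ≠ E[j].1 := fun heq =>
  hij ((h.nodup_vars.getElem_inj_iff (hi := by simpa using hi) (hj := by simpa using hj)).1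
    (by simpa using heq))

theorem mem_eraseIdx_fst_of_ne {j : ℕ} (hj : j < E.length) {y : V} (hy : y ∈ E.map Prod.fst)
    (hne : y ≠ E[j].1) : y ∈ (E.map Prod.fst).eraseIdx j := by
  have hperm := List.getElem_cons_eraseIdx_perm (l := E.map Prod.fst) (by simpa using hj)
  rcases List.mem_cons.1 (hperm.mem_iff.2 hy) with h | h
  · exact absurd (by simpa using h) hne
  · exact h

theorem residue_set [DecidableEq V] {x' : V} (hx' : x' ∉ E.map Prod.fst) (j : ℕ) (p' : Pat A V)
    (c : Col A) :
    residue (Function.update f x' p') (E.set j (x', c)) = (residue f E).set j p' := by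
  rw [residue, residue, List.map_set, Function.update_self]
  congr 1
  refine List.map_congr_left fun e he => Function.update_of_ne ?_ _ _
  rintro rfl
  exact hx' (List.mem_map_of_mem he)

variable [DecidableEq A] [DecidableEq V]

theorem substPat_update_substVar {x x' : V} {s : A ⊕ V} {p p' : Pat A V} (hx' : x' ∉ fvPat p)
    (hs : s ≠ Sum.inr x') (hdec : f x = substPat f [s] ++ p') :
    substPat (Function.update f x' p') (substVar x [s, Sum.inr x'] p) = substPat f p := by
  rw [substPat_substVar]
  refine substPat_congr fun y hy => ?_
  by_cases hyx : y = x
  · rcases s with a | z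
    · simp [hyx, hdec]
    · have hz : z ≠ x' := fun h => hs (congrArg _ h)
      simp [hyx, hdec, hz]
  · have hyx' : y ≠ x' := fun h => hx' (h ▸ hy)
    rw [Function.update_of_ne hyx, Function.update_of_ne hyx']

theorem Decodes.set (h : Decodes θs t f tc E) {j : ℕ} (hj : j < E.length) {s : A ⊕ V}
    {p' : Pat A V} {x' : V} (hx'E : x' ∉ E.map Prod.fst) (hx't : Sum.inr x' ∉ tc.flatten)
    (hs : ∀ y, s = Sum.inr y → y ∈ E.map Prod.fst ∧ y ≠ E[j].1)
    (hdec : f E[j].1 = substPat f [s] ++ p')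
    (hstep : PStep (residue f E) ((residue f E).set j p')) :
    Decodes θs t (Function.update f x' p') (substVarTP E[j].1 [s, Sum.inr x'] tc)
      (E.set j (x', column θs p')) where
  nodup_vars := by
    rw [List.map_set]
    exact h.nodup_vars.set hx'E
  column_eq e he := by
    rcases List.mem_or_eq_of_mem_set he with he | rfl
    · have hne : e.1 ≠ x' := fun heq => hx'E (heq ▸ List.mem_map_of_mem he)
      rw [Function.update_of_ne hne]
      exact h.column_eq e he
    · rw [Function.update_self]
  fvTP_subset y hy := by
    have hperm := List.set_perm_cons_eraseIdx (l := E.map Prod.fst) (by simpa using hj) x'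
    have hmem : ∀ y ∈ E.map Prod.fst, y ≠ E[j].1 → y ∈ (E.map Prod.fst).set j x' :=
      fun y hy hne => hperm.mem_iff.2 (List.mem_cons_of_mem _ (mem_eraseIdx_fst_of_ne hj hy hne))
    rw [List.map_set]
    obtain ⟨_, hsubst, hy⟩ := mem_fvTP.1 hy
    obtain ⟨p, hp, rfl⟩ := List.mem_map.1 hsubst
    rcases fvPat_substVar_subset hy with hy | ⟨hy, hne⟩
    · rcases List.mem_cons.1 hy with hy | hy
      · exact hmem y (hs y hy.symm).1 (hs y hy.symm).2
      · obtain rfl : y = x' := by simpa using hy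
        exact List.mem_set (by simpa using hj) _
    · exact hmem y (h.fvTP_subset y (mem_fvTP.2 ⟨p, hp, hy⟩)) hne
  map_substPat := by
    conv_rhs => rw [← h.map_substPat]
    rw [substVarTP, List.map_map]
    refine List.map_congr_left fun p hp => substPat_update_substVar ?_ ?_ hdec
    · exact fun hx' => hx't (mem_fvTP.2 ⟨p, hp, hx'⟩)
    · exact fun heq => hx'E (hs x' heq).1
  reduces := by
    rw [residue_set hx'E]
    exact h.reduces.tail hstep

theorem Decodes.eraseIdx (h : Decodes θs t f tc E) {j : ℕ} (hj : j < E.length)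
    (hnil : f E[j].1 = []) (hstep : PStep (residue f E) (residue f (E.eraseIdx j))) :
    Decodes θs t f (substVarTP E[j].1 [] tc) (E.eraseIdx j) where
  nodup_vars := by
    rw [← List.eraseIdx_map]
    exact h.nodup_vars.sublist (List.eraseIdx_sublist _ _)
  column_eq e he := h.column_eq e (List.mem_of_mem_eraseIdx he)
  fvTP_subset y hy := by
    obtain ⟨_, hsubst, hy⟩ := mem_fvTP.1 hy
    obtain ⟨p, hp, rfl⟩ := List.mem_map.1 hsubst
    rcases fvPat_substVar_subset hy with hy | ⟨hy, hne⟩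
    · simp [fvPat] at hy
    · rw [← List.eraseIdx_map]
      exact mem_eraseIdx_fst_of_ne hj (h.fvTP_subset y (mem_fvTP.2 ⟨p, hp, hy⟩)) hne
  map_substPat := by
    conv_rhs => rw [← h.map_substPat]
    rw [substVarTP, List.map_map]
    refine List.map_congr_left fun p _ => ?_
    rw [Function.comp_apply, substPat_substVar, substPat_nil, ← hnil, Function.update_eq_self]
  reduces := h.reduces.tail hstep

theorem Decodes.step (hθ : ReflectsPrefix θs (fvTP t)) {c c' : TP A V × DSub A V}
    (h : Decodes θs t f c.1 c.2.entries) (hstep : Step c c') :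
    ∃ f', Decodes θs t f' c'.1 c'.2.entries ∧
      PStep (residue f c.2.entries) (residue f' c'.2.entries) := by
  cases hstep with
  | pre tc m E i j hi hj hij s hslen hpre hne x' hx'E hx't =>
    have hEi := List.getElem_mem hi
    have hEj := List.getElem_mem hj
    rw [h.column_eq _ hEi] at hslen hpre hne
    rw [h.column_eq _ hEj] at hpre
    rw [hθ.allEps_column_iff (h.fvPat_subset hEi)] at hne
    obtain ⟨p', hdec, rfl⟩ := hθ.exists_append (h.fvPat_subset hEi) (h.fvPat_subset hEj)
      (by simpa using hslen) hpre
    have hP : PStep (residue f E) ((residue f E).set j p') :=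
      .pre _ i j (by simpa [residue] using hi) (by simpa [residue] using hj) hij p'
        (by simpa [residue] using hdec) (by simpa [residue] using hne)
    refine ⟨_, h.set hj hx'E hx't ?_ (by simpa using hdec) hP, (residue_set hx'E ..).symm ▸ hP⟩
    rintro _ ⟨⟩
    exact ⟨List.mem_map_of_mem hEi, h.fst_getElem_ne hi hj hij⟩
  | cpre tc m E j hj a s hpre x' hx'E hx't =>
    have hEj := List.getElem_mem hj
    rw [h.column_eq _ hEj] at hpre
    have hslen : s.length = θs.length := by
      simpa using (congrArg List.length hpre).symm
    obtain ⟨p', hdec, rfl⟩ := hθ.exists_append (by simp [fvPat]) (h.fvPat_subset hEj) hslen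
      (hpre.trans (map_cons_eq_zipWith_column hslen a))
    have hP : PStep (residue f E) ((residue f E).set j p') :=
      .cpre _ j (by simpa [residue] using hj) a p' (by simpa [residue] using hdec)
    exact ⟨_, h.set (s := Sum.inl a) hj hx'E hx't (by simp) hdec hP,
      (residue_set hx'E ..).symm ▸ hP⟩
  | eps tc m E j hj heps =>
    rw [h.column_eq _ (List.getElem_mem hj),
      hθ.allEps_column_iff (h.fvPat_subset (List.getElem_mem hj))] at heps
    have hP : PStep (residue f E) (residue f (E.eraseIdx j)) := by
      rw [residue, residue, ← List.eraseIdx_map]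
      exact .eps _ j (by simpa using hj) (by simpa using heps)
    exact ⟨f, h.eraseIdx hj heps hP, hP⟩

theorem Decodes.reflTransGen (hθ : ReflectsPrefix θs (fvTP t)) {c c' : TP A V × DSub A V}
    (h : Decodes θs t f c.1 c.2.entries) (hred : Relation.ReflTransGen Step c c') :
    ∃ f', Decodes θs t f' c'.1 c'.2.entries := by
  induction hred with
  | refl => exact ⟨f, h⟩
  | tail _ hstep ih =>
    obtain ⟨f₁, hf₁⟩ := ih
    obtain ⟨f₂, hf₂, -⟩ := hf₁.step hθ hstep
    exact ⟨f₂, hf₂⟩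

theorem Decodes.exists_normal (hθ : ReflectsPrefix θs (fvTP t)) {c : TP A V × DSub A V}
    (h : Decodes θs t f c.1 c.2.entries) :
    ∃ c', Relation.ReflTransGen Step c c' ∧ ¬ ∃ d, Step c' d := by
  induction hq : residue f c.2.entries using wellFounded_flip_pstep.induction generalizing f c with
  | _ q ih =>
    subst hq
    by_cases hc : ∃ d, Step c d
    · obtain ⟨d, hd⟩ := hc
      obtain ⟨f', hf', hP⟩ := h.step hθ hd
      obtain ⟨c', hred, hc'⟩ := ih _ hP hf' rfl
      exact ⟨c', hred.head hd, hc'⟩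
    · exact ⟨c, .refl, hc⟩

end Simulation

section TerminalConfigurations

variable {f : V → Pat A V} {E : List (V × Col A)} {θs : List (V → Word A)} {t tc : TP A V}

theorem exists_fresh [Infinite V] (xs : List V) (p : Pat A V) :
    ∃ x : V, x ∉ xs ∧ Sum.inr x ∉ p := by
  have hp : (fvPat p).Finite := p.finite_toSet.preimage Sum.inr_injective.injOn
  obtain ⟨x, hx⟩ := (xs.finite_toSet.union hp).exists_notMem
  rw [Set.mem_union, not_or] at hx
  exact ⟨x, hx⟩

theorem exists_perm_map_eq {α : Type*} {l l' : List α} (hl : l.Nodup) (hl' : l'.Nodup)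
    (hlen : l.length = l'.length) : ∃ σ : Equiv.Perm α, l.map σ = l' := by
  obtain ⟨σ, hσ⟩ := Equiv.Perm.exists_extending_pair (fun i : Fin l.length => l[i])
    (fun i : Fin l.length => l'[i]) (List.nodup_iff_injective_getElem.1 hl) fun i j hij =>
      Fin.ext ((hl'.getElem_inj_iff (hi := by omega) (hj := by omega)).1 hij)
  refine ⟨σ, List.ext_getElem (by simpa using hlen) fun i hi _ => ?_⟩
  simpa using hσ ⟨i, by simpa using hi⟩

variable [DecidableEq A] [DecidableEq V]

theorem Decodes.exists_step_of_pstep [Infinite V] (hθ : ReflectsPrefix θs (fvTP t)) (m : ℕ)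
    (h : Decodes θs t f tc E) {q : TP A V} (hq : PStep (residue f E) q) :
    ∃ c, Step (tc, ⟨m, E⟩) c := by
  obtain ⟨x', hx'E, hx't⟩ := exists_fresh (E.map Prod.fst) tc.flatten
  have hcol : ∀ (k : ℕ) (hk : k < E.length), E[k].2 = column θs (f E[k].1) := fun k hk =>
    h.column_eq _ (List.getElem_mem hk)
  cases hq with
  | pre i j hi hj hij p' hdec hne =>
    simp only [residue, List.length_map, List.getElem_map] at hi hj hdec hne
    refine ⟨_, .pre tc m E i j hi hj hij (column θs p') ?_ ?_ ?_ x' hx'E hx't⟩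
    · simp [hcol]
    · rw [hcol i, hcol j, hdec, column_append]
    · rwa [hcol i, hθ.allEps_column_iff (h.fvPat_subset (List.getElem_mem hi))]
  | cpre j hj a p' hdec =>
    simp only [residue, List.length_map, List.getElem_map] at hj hdec
    refine ⟨_, .cpre tc m E j hj a (column θs p') ?_ x' hx'E hx't⟩
    rw [hcol j, hdec]
    simp [column]
  | eps j hj heps =>
    simp only [residue, List.length_map, List.getElem_map] at hj heps
    refine ⟨_, .eps tc m E j hj ?_⟩
    rwa [hcol j, hθ.allEps_column_iff (h.fvPat_subset (List.getElem_mem hj))]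

theorem Decodes.exists_eq_renameTP [Infinite V] (hθ : ReflectsPrefix θs (fvTP t))
    (ht : Solvable t) {c : TP A V × DSub A V} (h : Decodes θs t f c.1 c.2.entries)
    (hc : ¬ ∃ d, Step c d) : ∃ σ : Equiv.Perm V, c.1 = renameTP σ t := by
  obtain ⟨tc, m, E⟩ := c
  obtain ⟨zs, hzs, hres⟩ := ht.exists_eq_trivTP h.reduces
    fun ⟨_, hq⟩ => hc (h.exists_step_of_pstep hθ m hq)
  have hlen : zs.length = (E.map Prod.fst).length := by
    simpa [residue, trivTP] using (congrArg List.length hres).symm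
  obtain ⟨σ, hσ⟩ := exists_perm_map_eq hzs h.nodup_vars hlen
  have hrename : ∀ y ∈ E.map Prod.fst, (f y).map (Sum.map id σ) = [Sum.inr y] := by
    rw [← List.map_inj_left]
    calc (E.map Prod.fst).map (fun y => (f y).map (Sum.map id σ))
        = (residue f E).map (List.map (Sum.map id σ)) := by simp [residue]
      _ = (zs.map σ).map fun y => [Sum.inr y] := by simp [hres, trivTP]
      _ = (E.map Prod.fst).map fun y => [Sum.inr y] := by rw [hσ]
  refine ⟨σ, ?_⟩
  rw [← h.map_substPat, renameTP, List.map_map]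
  refine (List.map_id' tc).symm.trans (List.map_congr_left fun p hp => ?_)
  rw [Function.comp_apply, map_sumMap_substPat, substPat_congr (g := fun y => [Sum.inr y]),
    substPat_var]
  exact fun y hy => hrename y (h.fvTP_subset y (mem_fvTP.2 ⟨p, hp, hy⟩))

end TerminalConfigurations

section LearningData

variable {t : TP A V} {xs : List V}

theorem exists_map_eq_of_nodup {α β : Type*} [Inhabited β] {xs : List α} {ys : List β}
    (hxs : xs.Nodup) (hlen : xs.length = ys.length) : ∃ f : α → β, xs.map f = ys := by
  classical
  refine ⟨fun x => ys.getD (xs.idxOf x) default, List.ext_getElem (by simpa using hlen) ?_⟩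
  intro i hi hi'
  simp [hxs.idxOf_getElem, hi']

variable [DecidableEq A] [DecidableEq V] [Infinite V]

theorem exists_normal_and_forall_eq_renameTP {θs : List (V → Word A)}
    (hθ : ReflectsPrefix θs (fvTP t)) (ht : Solvable t) (hxs : xs.Nodup)
    (hlen : xs.length = t.length) (m : ℕ) :
    (∃ c, Relation.ReflTransGen Step (trivTP xs, ⟨m, xs.zip (t.map (column θs))⟩) c ∧
      ¬ ∃ d, Step c d) ∧
    ∀ c, Relation.ReflTransGen Step (trivTP xs, ⟨m, xs.zip (t.map (column θs))⟩) c →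
      (¬ ∃ d, Step c d) → ∃ σ : Equiv.Perm V, c.1 = renameTP σ t := by
  obtain ⟨f, rfl⟩ := exists_map_eq_of_nodup hxs hlen
  have hinit := Decodes.initial (θs := θs) (f := f) hxs
  have hzip : xs.zip ((xs.map f).map (column θs)) = xs.map fun x => (x, column θs (f x)) := by
    simpa [Function.comp_def] using
      List.zip_map' (l := xs) (f := id) (g := fun x => column θs (f x))
  rw [hzip]
  refine ⟨Decodes.exists_normal hθ hinit, fun c hred hc => ?_⟩
  obtain ⟨f', hdecodes⟩ := Decodes.reflTransGen hθ hinit hred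
  exact hdecodes.exists_eq_renameTP hθ ht hc

theorem data_size_general [Nontrivial A] (t : TP A V) (ht : Solvable t) :
    ∃ M : Data A, M.length = t.length ∧ (∀ c ∈ M, c.length = 2) ∧
      dataSize M ≤ 2 * tpMeasure t * (Nat.clog 2 t.length + 1) ∧
      ∀ xs : List V, xs.Nodup → xs.length = t.length →
        (∃ (ρ : V → V) (Θ : DSub A V), Function.Injective ρ ∧
            Relation.ReflTransGen Step (trivTP xs, ⟨2, xs.zip M⟩) (renameTP ρ t, Θ) ∧
            ¬ ∃ c, Step (renameTP ρ t, Θ) c) ∧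
        (∀ (t' : TP A V) (Θ' : DSub A V),
            Relation.ReflTransGen Step (trivTP xs, ⟨2, xs.zip M⟩) (t', Θ') →
            (¬ ∃ c, Step (t', Θ') c) → lang t = lang t') := by
  obtain ⟨ys, hys, hvars⟩ := ht.exists_length_le_fvTP_subset
  obtain ⟨θ₁, θ₂, hys_reflects, hlen⟩ := exists_twoRows_reflectsPrefix (A := A) ys
    (hys.trans (Nat.le_pow_clog one_lt_two _))
  have hreflects := hys_reflects.mono hvars
  refine ⟨t.map (column [θ₁, θ₂]), List.length_map _, by simp,
    dataSize_map_column_le (Nat.le_add_left 1 _) (fun θ hθ y => (hlen θ hθ y).le) t,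
    fun xs hxs hxs_len => ?_⟩
  obtain ⟨⟨⟨t₀, Θ⟩, hred, hterminal⟩, hrename⟩ :=
    exists_normal_and_forall_eq_renameTP hreflects ht hxs hxs_len 2
  constructor
  · obtain ⟨σ, rfl⟩ := hrename _ hred hterminal
    exact ⟨σ, Θ, σ.injective, hred, hterminal⟩
  · intro t' Θ' hred' hterminal'
    obtain ⟨σ, rfl⟩ := hrename _ hred' hterminal'
    exact (lang_renameTP σ t).symm

end LearningData

/-- **Size of learning data.**
There is a constant `C` such that for every solvable tuple pattern `t = (p₁,…,pₙ)` with
`|p₁⋯pₙ| = mlen` there is learning data `M` with two rows such that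
(i) `size(M) ≤ C·(mlen+n)·(⌈log₂ n⌉+1)`;
(ii) `((x₁,…,xₙ), [M/x⃗]) ⟶* (t, Θ)` (up to renaming of the variables of `t`) for some `Θ`
with `(t, Θ)` admitting no further step; and
(iii) whenever `((x₁,…,xₙ), [M/x⃗]) ⟶* (t′, Θ′)` with `(t′, Θ′)` admitting no further
step, `L(t) = L(t′)`. -/
theorem data_size
    [DecidableEq A] [DecidableEq V] [Nontrivial A] [Countable V] [Infinite V] :
    ∃ C : ℕ, ∀ (t : TP A V) (n mlen : ℕ),
      t.length = n → (t.map List.length).sum = mlen → Solvable t →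
      ∃ M : Data A, M.length = n ∧ (∀ c ∈ M, c.length = 2) ∧
        dataSize M ≤ C * (mlen + n) * (Nat.clog 2 n + 1) ∧
        ∀ xs : List V, xs.Nodup → xs.length = n →
          (∃ (ρ : V → V) (Θ : DSub A V), Function.Injective ρ ∧
              Relation.ReflTransGen Step (trivTP xs, ⟨2, xs.zip M⟩) (renameTP ρ t, Θ) ∧
              ¬ ∃ c, Step (renameTP ρ t, Θ) c) ∧
          (∀ (t' : TP A V) (Θ' : DSub A V),
              Relation.ReflTransGen Step (trivTP xs, ⟨2, xs.zip M⟩) (t', Θ') →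
              (¬ ∃ c, Step (t', Θ') c) → lang t = lang t') := by
  exact ⟨2, fun t n mlen hn hlen ht => hn ▸ hlen ▸ data_size_general t ht⟩

end STPaper
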